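/- For all (u_1,u_2,u_3) with u_1,u_3 ∈ (0,1) and u_2 ∈ [0,1], the mixed second partial derivative of the three-dimensional vine copula C with respect to u_1 and u_3 satisfies ∂²C(u_1,u_2,u_3)/∂u_1∂u_3 = ∫_0^{u_2} c_{13;2}( C_{1|2}(u_1|v_2), C_{3|2}(u_3|v_2) ) · c_{23}(v_2,u_3) · c_{12}(u_1,v_2) dv_2. -/

import Mathlib

noncomputable section

/-- The density of a bivariate copula: the mixed second partial derivative `∂²C/∂s∂t`. -/
def copDens (C : ℝ × ℝ → ℝ) (s t : ℝ) : ℝ :=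
  deriv (fun a => deriv (fun b => C (a, b)) t) s

/-- The conditional distribution function `C_{1|2}(u₁|u₂) = ∂C₁₂(u₁,u₂)/∂u₂`. -/
def cond12 (C12 : ℝ × ℝ → ℝ) (u1 u2 : ℝ) : ℝ :=
  deriv (fun b => C12 (u1, b)) u2

/-- The conditional distribution function `C_{3|2}(u₃|u₂) = ∂C₂₃(u₂,u₃)/∂u₂`. -/
def cond32 (C23 : ℝ × ℝ → ℝ) (u3 u2 : ℝ) : ℝ :=
  deriv (fun a => C23 (a, u3)) u2

/-- `∂₁C(x,y) = ∂C(x,y)/∂x`. -/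
def pdFst (C : ℝ × ℝ → ℝ) (x y : ℝ) : ℝ := deriv (fun a => C (a, y)) x

/-- `∂₃C(x,y) = ∂C(x,y)/∂y` (derivative in the second argument). -/
def pdSnd (C : ℝ × ℝ → ℝ) (x y : ℝ) : ℝ := deriv (fun b => C (x, b)) y

/-- The three-dimensional vine copula built from the pair copulas `C₁₂, C₂₃, C₁₃;₂`:
`C(u₁,u₂,u₃) = ∫₀^{u₁}∫₀^{u₂}∫₀^{u₃} c₁₂(v₁,v₂) c₂₃(v₂,v₃)
  c₁₃;₂(C_{1|2}(v₁|v₂), C_{3|2}(v₃|v₂)) dv₃ dv₂ dv₁`. -/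
def vine (C12 C23 C132 : ℝ × ℝ → ℝ) (u1 u2 u3 : ℝ) : ℝ :=
  ∫ v1 in (0:ℝ)..u1, ∫ v2 in (0:ℝ)..u2, ∫ v3 in (0:ℝ)..u3,
    copDens C12 v1 v2 * copDens C23 v2 v3 *
      copDens C132 (cond12 C12 v1 v2) (cond32 C23 v3 v2)

/-- The second partial derivative of a `C^(n+1)` function on an open set is `C^n`. -/
theorem contDiffOn_deriv_snd {n : ℕ} {f : ℝ × ℝ → ℝ} {U : Set (ℝ × ℝ)} (hU : IsOpen U)
    (hf : ContDiffOn ℝ (n + 1) f U) :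
    ContDiffOn ℝ n (fun p : ℝ × ℝ => deriv (fun b => f (p.1, b)) p.2) U := by
  have hd : ContDiffOn ℝ n (fun p => fderiv ℝ f p (0, 1)) U :=
    (hf.fderiv_of_isOpen hU le_rfl).clm_apply contDiffOn_const
  refine hd.congr fun p hp => ?_
  have hfp : HasFDerivAt f (fderiv ℝ f p) (p.1, p.2) :=
    ((hf.contDiffAt (hU.mem_nhds hp)).differentiableAt (by simp)).hasFDerivAt
  exact (hfp.comp_hasDerivAt p.2 ((hasDerivAt_const p.2 p.1).prodMk (hasDerivAt_id p.2))).deriv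

/-- The first partial derivative of a `C^(n+1)` function on an open set is `C^n`. -/
theorem contDiffOn_deriv_fst {n : ℕ} {f : ℝ × ℝ → ℝ} {U : Set (ℝ × ℝ)} (hU : IsOpen U)
    (hf : ContDiffOn ℝ (n + 1) f U) :
    ContDiffOn ℝ n (fun p : ℝ × ℝ => deriv (fun a => f (a, p.2)) p.1) U := by
  have hd : ContDiffOn ℝ n (fun p => fderiv ℝ f p (1, 0)) U :=
    (hf.fderiv_of_isOpen hU le_rfl).clm_apply contDiffOn_const
  refine hd.congr fun p hp => ?_
  have hfp : HasFDerivAt f (fderiv ℝ f p) (p.1, p.2) :=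
    ((hf.contDiffAt (hU.mem_nhds hp)).differentiableAt (by simp)).hasFDerivAt
  exact (hfp.comp_hasDerivAt p.1 ((hasDerivAt_id p.1).prodMk (hasDerivAt_const p.1 p.2))).deriv

theorem continuousOn_copDens {C : ℝ × ℝ → ℝ} {U : Set (ℝ × ℝ)} (hU : IsOpen U)
    (hC : ContDiffOn ℝ 2 C U) : ContinuousOn (fun p : ℝ × ℝ => copDens C p.1 p.2) U := by
  have h : ContDiffOn ℝ ((0 : ℕ) + 1) (fun p : ℝ × ℝ => deriv (fun b => C (p.1, b)) p.2) U := by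
    simpa using contDiffOn_deriv_snd (n := 1) hU (by simpa [one_add_one_eq_two] using hC)
  exact (contDiffOn_deriv_fst hU h).continuousOn

theorem continuousOn_cond12 {C : ℝ × ℝ → ℝ} {U : Set (ℝ × ℝ)} (hU : IsOpen U)
    (hC : ContDiffOn ℝ 2 C U) : ContinuousOn (fun p : ℝ × ℝ => cond12 C p.1 p.2) U :=
  (contDiffOn_deriv_snd (n := 1) hU (by simpa [one_add_one_eq_two] using hC)).continuousOn

theorem continuousOn_cond32 {C : ℝ × ℝ → ℝ} {U : Set (ℝ × ℝ)} (hU : IsOpen U)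
    (hC : ContDiffOn ℝ 2 C U) : ContinuousOn (fun p : ℝ × ℝ => cond32 C p.2 p.1) U :=
  (contDiffOn_deriv_fst (n := 1) hU (by simpa [one_add_one_eq_two] using hC)).continuousOn

open MeasureTheory in
theorem intervalIntegral_swap_of_continuous {f : ℝ → ℝ → ℝ}
    (hf : Continuous fun p : ℝ × ℝ => f p.1 p.2) (a b c d : ℝ) :
    ∫ x in a..b, ∫ y in c..d, f x y = ∫ y in c..d, ∫ x in a..b, f x y := by
  refine intervalIntegral_intervalIntegral_swap ?_
  exact (hf.continuousOn.integrableOn_compact (isCompact_uIcc.prod isCompact_uIcc)).mono_set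
    (Set.prod_mono Set.uIoc_subset_uIcc Set.uIoc_subset_uIcc)

/-- Differentiating a triple integral of a continuous function in the outer and inner limits. -/
theorem deriv_deriv_triple_integral {G : ℝ → ℝ → ℝ → ℝ}
    (hG : Continuous fun p : ℝ × ℝ × ℝ => G p.1 p.2.1 p.2.2) (u1 u2 u3 : ℝ) :
    deriv (fun a => deriv (fun c => ∫ x in (0:ℝ)..a, ∫ y in (0:ℝ)..u2, ∫ z in (0:ℝ)..c, G x y z) u3)
      u1 = ∫ y in (0:ℝ)..u2, G u1 y u3 := by
  have hI : Continuous fun p : ℝ × ℝ => ∫ y in (0:ℝ)..u2, G p.1 y p.2 :=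
    intervalIntegral.continuous_parametric_intervalIntegral_of_continuous'
      (f := fun (p : ℝ × ℝ) y => G p.1 y p.2)
      (hG.comp (f := fun q : (ℝ × ℝ) × ℝ => (q.1.1, q.2, q.1.2)) (by fun_prop)) 0 u2
  have hinner (a : ℝ) :
      deriv (fun c => ∫ x in (0:ℝ)..a, ∫ y in (0:ℝ)..u2, ∫ z in (0:ℝ)..c, G x y z) u3 =
        ∫ x in (0:ℝ)..a, ∫ y in (0:ℝ)..u2, G x y u3 := by
    have hswap (c : ℝ) : ∫ x in (0:ℝ)..a, ∫ y in (0:ℝ)..u2, ∫ z in (0:ℝ)..c, G x y z =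
        ∫ z in (0:ℝ)..c, ∫ x in (0:ℝ)..a, ∫ y in (0:ℝ)..u2, G x y z := by
      rw [← intervalIntegral_swap_of_continuous
        (f := fun x z => ∫ y in (0:ℝ)..u2, G x y z) hI]
      refine intervalIntegral.integral_congr fun x _ => ?_
      exact intervalIntegral_swap_of_continuous
        (hG.comp (f := fun q : ℝ × ℝ => (x, q.1, q.2)) (by fun_prop)) _ _ _ _
    simp_rw [hswap]
    refine Continuous.deriv_integral _ ?_ 0 u3
    exact intervalIntegral.continuous_parametric_intervalIntegral_of_continuous'
      (f := fun z x => ∫ y in (0:ℝ)..u2, G x y z)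
      (hI.comp (f := fun q : ℝ × ℝ => (q.2, q.1)) (by fun_prop)) 0 a
  simp_rw [hinner]
  exact Continuous.deriv_integral _ (hI.comp (f := fun x : ℝ => (x, u3)) (by fun_prop)) 0 u1

/-- A function continuous on the unit cube agrees there with a continuous function. -/
theorem exists_continuous_eqOn_cube {F : ℝ → ℝ → ℝ → ℝ}
    (hF : ContinuousOn (fun p : ℝ × ℝ × ℝ => F p.1 p.2.1 p.2.2)
      (Set.Icc 0 1 ×ˢ Set.Icc 0 1 ×ˢ Set.Icc 0 1)) :
    ∃ G : ℝ → ℝ → ℝ → ℝ, (Continuous fun p : ℝ × ℝ × ℝ => G p.1 p.2.1 p.2.2) ∧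
      ∀ x ∈ Set.Icc (0:ℝ) 1, ∀ y ∈ Set.Icc (0:ℝ) 1, ∀ z ∈ Set.Icc (0:ℝ) 1,
        G x y z = F x y z := by
  let k : ℝ → ℝ := fun x => Set.projIcc (0:ℝ) 1 zero_le_one x
  have hk : Continuous k := continuous_subtype_val.comp continuous_projIcc
  have hmem (x : ℝ) : k x ∈ Set.Icc (0:ℝ) 1 := (Set.projIcc (0:ℝ) 1 zero_le_one x).2
  have heq {x : ℝ} (hx : x ∈ Set.Icc (0:ℝ) 1) : k x = x :=
    congrArg Subtype.val (Set.projIcc_of_mem zero_le_one hx)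
  refine ⟨fun x y z => F (k x) (k y) (k z), ?_, fun x hx y hy z hz => ?_⟩
  · exact hF.comp_continuous (f := fun p : ℝ × ℝ × ℝ => (k p.1, k p.2.1, k p.2.2))
      (by fun_prop) fun p => ⟨hmem _, hmem _, hmem _⟩
  · simp only [heq hx, heq hy, heq hz]

/-- ∂²C(u₁,u₂,u₃)/∂u₁∂u₃ = ∫₀^{u₂} c₁₃;₂(C_{1|2}(u₁|v₂), C_{3|2}(u₃|v₂)) ⬝ c₂₃(v₂,u₃) ⬝ c₁₂(u₁,v₂) dv₂. -/
theorem vine_partial_u1_u3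
    (C12 C23 C132 : ℝ × ℝ → ℝ)
    (U : Set (ℝ × ℝ)) (hU : IsOpen U)
    (hUsub : Set.Icc ((0 : ℝ), (0 : ℝ)) (1, 1) ⊆ U)
    (h12 : ContDiffOn ℝ 2 C12 U) (h23 : ContDiffOn ℝ 2 C23 U)
    (h132 : ContDiffOn ℝ 2 C132 U)
    (hb12 : ∀ t ∈ Set.Icc (0:ℝ) 1, C12 (0, t) = 0 ∧ C12 (t, 0) = 0)
    (hb23 : ∀ t ∈ Set.Icc (0:ℝ) 1, C23 (0, t) = 0 ∧ C23 (t, 0) = 0)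
    (hb132 : ∀ t ∈ Set.Icc (0:ℝ) 1, C132 (0, t) = 0 ∧ C132 (t, 0) = 0)
    (hr12 : ∀ u1 ∈ Set.Icc (0:ℝ) 1, ∀ u2 ∈ Set.Icc (0:ℝ) 1,
      cond12 C12 u1 u2 ∈ Set.Icc (0:ℝ) 1)
    (hr32 : ∀ u3 ∈ Set.Icc (0:ℝ) 1, ∀ u2 ∈ Set.Icc (0:ℝ) 1,
      cond32 C23 u3 u2 ∈ Set.Icc (0:ℝ) 1)
    (u1 u2 u3 : ℝ) (hu1 : u1 ∈ Set.Ioo (0:ℝ) 1) (hu2 : u2 ∈ Set.Icc (0:ℝ) 1)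
    (hu3 : u3 ∈ Set.Ioo (0:ℝ) 1) :
    deriv (fun a => deriv (fun c => vine C12 C23 C132 a u2 c) u3) u1 =
      ∫ v2 in (0:ℝ)..u2,
        copDens C132 (cond12 C12 u1 v2) (cond32 C23 u3 v2) * copDens C23 v2 u3 *
          copDens C12 u1 v2 := by
  have hmem {x y : ℝ} (hx : x ∈ Set.Icc (0:ℝ) 1) (hy : y ∈ Set.Icc (0:ℝ) 1) : (x, y) ∈ U :=
    hUsub ⟨⟨hx.1, hy.1⟩, ⟨hx.2, hy.2⟩⟩
  have hF : ContinuousOn (fun p : ℝ × ℝ × ℝ => copDens C12 p.1 p.2.1 * copDens C23 p.2.1 p.2.2 *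
      copDens C132 (cond12 C12 p.1 p.2.1) (cond32 C23 p.2.2 p.2.1))
      (Set.Icc 0 1 ×ˢ Set.Icc 0 1 ×ˢ Set.Icc 0 1) := by
    have hm12 : Set.MapsTo (fun p : ℝ × ℝ × ℝ => (p.1, p.2.1))
        (Set.Icc 0 1 ×ˢ Set.Icc 0 1 ×ˢ Set.Icc 0 1) U := fun p hp => hmem hp.1 hp.2.1
    have hm23 : Set.MapsTo (fun p : ℝ × ℝ × ℝ => (p.2.1, p.2.2))
        (Set.Icc 0 1 ×ˢ Set.Icc 0 1 ×ˢ Set.Icc 0 1) U := fun p hp => hmem hp.2.1 hp.2.2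
    have hc12 := (continuousOn_cond12 hU h12).comp (by fun_prop) hm12
    have hc32 := (continuousOn_cond32 hU h23).comp (by fun_prop) hm23
    refine (((continuousOn_copDens hU h12).comp (by fun_prop) hm12).mul
      ((continuousOn_copDens hU h23).comp (by fun_prop) hm23)).mul ?_
    exact (continuousOn_copDens hU h132).comp (hc12.prodMk hc32) fun p hp =>
      hmem (hr12 _ hp.1 _ hp.2.1) (hr32 _ hp.2.2 _ hp.2.1)
  obtain ⟨G, hG, hGF⟩ := exists_continuous_eqOn_cube (F := fun x y z =>
    copDens C12 x y * copDens C23 y z * copDens C132 (cond12 C12 x y) (cond32 C23 z y)) hF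
  have hsub {u x : ℝ} (hu : u ∈ Set.Icc (0:ℝ) 1) (hx : x ∈ Set.uIcc 0 u) :
      x ∈ Set.Icc (0:ℝ) 1 := by
    rw [Set.uIcc_of_le hu.1] at hx
    exact ⟨hx.1, hx.2.trans hu.2⟩
  have hvine {a c : ℝ} (ha : a ∈ Set.Icc (0:ℝ) 1) (hc : c ∈ Set.Icc (0:ℝ) 1) :
      vine C12 C23 C132 a u2 c = ∫ x in (0:ℝ)..a, ∫ y in (0:ℝ)..u2, ∫ z in (0:ℝ)..c, G x y z :=
    intervalIntegral.integral_congr fun x hx => intervalIntegral.integral_congr fun y hy =>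
      intervalIntegral.integral_congr fun z hz =>
        (hGF x (hsub ha hx) y (hsub hu2 hy) z (hsub hc hz)).symm
  have hderiv : (fun a => deriv (fun c => vine C12 C23 C132 a u2 c) u3) =ᶠ[nhds u1] fun a =>
      deriv (fun c => ∫ x in (0:ℝ)..a, ∫ y in (0:ℝ)..u2, ∫ z in (0:ℝ)..c, G x y z) u3 := by
    filter_upwards [Icc_mem_nhds hu1.1 hu1.2] with a ha
    apply Filter.EventuallyEq.deriv_eq
    filter_upwards [Icc_mem_nhds hu3.1 hu3.2] with c hc
    exact hvine ha hc
  rw [hderiv.deriv_eq, deriv_deriv_triple_integral hG]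
  refine intervalIntegral.integral_congr fun y hy => ?_
  have h := hGF u1 (Set.Ioo_subset_Icc_self hu1) y (hsub hu2 hy) u3 (Set.Ioo_subset_Icc_self hu3)
  simp only [h]
  ring

end
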